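/- For each n, let Y_n = (y_1, …, y_n) be a tuple of n points in ℝ², let Q_n be the associated t-SNE output distribution on unordered pairs of [n], and let U_n be the uniform distribution on unordered pairs. Let r : ℕ → (0, ∞) satisfy r(n) → 0. If D(U_n‖Q_n)/r(n)⁶ → 0, or if D(Q_n‖U_n)/r(n)⁶ → 0, then for all sufficiently large n there exists an open ball in ℝ² of radius r(n) containing at least (1 − r(n))·n of the points y_1, …, y_n. -/

import Mathlib

open Filter Finset
open scoped Classical

noncomputable section

/-- Normalization constant `Z` of the t-SNE output similarities. -/
def Zsum {N s : ℕ} (y : Fin N → EuclideanSpace ℝ (Fin s)) : ℝ :=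
  ∑ i, ∑ j, if i < j then (1 + ‖y i - y j‖ ^ 2)⁻¹ else 0

/-- t-SNE output pair probability `q_{ij}`. -/
def qmat {N s : ℕ} (y : Fin N → EuclideanSpace ℝ (Fin s)) (i j : Fin N) : ℝ :=
  (1 + ‖y i - y j‖ ^ 2)⁻¹ / Zsum y

/-- The uniform probability of a single unordered pair of `[n]`, i.e. `1/C(n,2)`. -/
def unifPair (n : ℕ) : ℝ := 1 / ((n : ℝ) * ((n : ℝ) - 1) / 2)

/-- `D(U‖Q)` for the t-SNE output distribution `Q` of `y : Fin n → ℝ²`. -/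
def KLUnifQ {n : ℕ} (y : Fin n → EuclideanSpace ℝ (Fin 2)) : ℝ :=
  ∑ i, ∑ j, if i < j then unifPair n * Real.log (unifPair n / qmat y i j) else 0

/-- `D(Q‖U)` for the t-SNE output distribution `Q` of `y : Fin n → ℝ²`. -/
def KLQUnif {n : ℕ} (y : Fin n → EuclideanSpace ℝ (Fin 2)) : ℝ :=
  ∑ i, ∑ j, if i < j then qmat y i j * Real.log (qmat y i j / unifPair n) else 0

/-!
The Kullback–Leibler divergence dominates the squared Hellinger distance in both directions, so if
either divergence is small, then `q i j` is close to the uniform weight for all but a small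
proportion of the pairs. For such pairs `1 + ‖y i - y j‖ ^ 2` nearly equals one constant `A`. By
Turán's theorem some `s + 2` points of `ℝ^s` have only unexceptional pairs. They are affinely
dependent: there are weights `w ≠ 0` with `∑ w i = 0` and `∑ w i • y i = 0`, and then
`∑ i, ∑ j, w i * w j * ‖y i - y j‖ ^ 2 = 0`. This is impossible for nearly equal positive distances
unless `A - 1` is small. Hence the two points of every unexceptional pair are close, and a ball
around a point with few exceptional partners contains most of the points.
-/

section Divergence

variable {α : Type*} (A : Finset α) (p q : α → ℝ)

/-- The Kullback–Leibler divergence `D(p‖q) = ∑ p log (p / q)` of two weight functions on a finite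
set `A`. -/
def finsetKL : ℝ := ∑ a ∈ A, p a * Real.log (p a / q a)

/-- The squared Hellinger distance of two weight functions on a finite set `A`, without the
customary factor `1 / 2`. It bounds both `D(p‖q)` and `D(q‖p)` from below. -/
def hellingerSq : ℝ := ∑ a ∈ A, (√(p a) - √(q a)) ^ 2

lemma hellingerSq_comm : hellingerSq A p q = hellingerSq A q p :=
  sum_congr rfl fun a _ ↦ sub_sq_comm √(p a) √(q a)

lemma sq_sqrt_sub_sqrt_le_mul_log_div {x z : ℝ} (hx : 0 < x) (hz : 0 < z) :
    (√x - √z) ^ 2 ≤ x * Real.log (x / z) - x + z := by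
  have hlog : Real.log (x / z) = -(2 * Real.log (√z / √x)) := by
    rw [← Real.sqrt_div' z hx.le, Real.log_sqrt (by positivity), mul_div_cancel₀ _ two_ne_zero,
      ← Real.log_inv, inv_div]
  have hle : Real.log (√z / √x) ≤ √z / √x - 1 := Real.log_le_sub_one_of_pos (by positivity)
  calc (√x - √z) ^ 2 = √x ^ 2 * -(2 * (√z / √x - 1)) - √x ^ 2 + √z ^ 2 := by field_simp; ring
    _ ≤ √x ^ 2 * -(2 * Real.log (√z / √x)) - √x ^ 2 + √z ^ 2 := by gcongr
    _ = x * Real.log (x / z) - x + z := by rw [hlog, Real.sq_sqrt hx.le, Real.sq_sqrt hz.le]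

variable {A p q}

lemma hellingerSq_le_finsetKL (hp : ∀ a ∈ A, 0 < p a) (hq : ∀ a ∈ A, 0 < q a)
    (hpq : ∑ a ∈ A, p a = ∑ a ∈ A, q a) : hellingerSq A p q ≤ finsetKL A p q :=
  calc hellingerSq A p q ≤ ∑ a ∈ A, (p a * Real.log (p a / q a) - p a + q a) :=
        sum_le_sum fun a ha ↦ sq_sqrt_sub_sqrt_le_mul_log_div (hp a ha) (hq a ha)
    _ = finsetKL A p q := by
        rw [sum_add_distrib, sum_sub_distrib, hpq, sub_add_cancel, finsetKL]

lemma sq_mul_le_sq_sqrt_sub_sqrt {x z ε : ℝ} (hx : 0 ≤ x) (hz : 0 ≤ z) (hε : 0 ≤ ε) (hε₁ : ε ≤ 1)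
    (h : ε * z ≤ |x - z|) : ε ^ 2 * z ≤ 9 * (√x - √z) ^ 2 := by
  have hsx := Real.sqrt_nonneg x
  have hsz := Real.sqrt_nonneg z
  have hfactor : |x - z| = |√x - √z| * (√x + √z) := by
    rw [← abs_of_nonneg (add_nonneg hsx hsz), ← abs_mul, mul_comm, ← sq_sub_sq, Real.sq_sqrt hx,
      Real.sq_sqrt hz]
  have hlin : ε * √z ≤ 3 * |√x - √z| := by
    by_contra! hlt
    have hsum : √x + √z ≤ 3 * √z := by nlinarith [le_abs_self (√x - √z)]
    have hprod : |√x - √z| * (√x + √z) ≤ |√x - √z| * (3 * √z) := by gcongr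
    have hz_pos : 0 < √z := hsz.lt_of_ne' fun h0 ↦ by
      rw [h0, mul_zero] at hlt
      linarith [abs_nonneg (√x - 0)]
    nlinarith [Real.sq_sqrt hz]
  calc ε ^ 2 * z = (ε * √z) ^ 2 := by rw [mul_pow, Real.sq_sqrt hz]
    _ ≤ (3 * |√x - √z|) ^ 2 := by gcongr
    _ = 9 * (√x - √z) ^ 2 := by rw [mul_pow, sq_abs]; norm_num

lemma card_mul_le_hellingerSq {B : Finset α} (hBA : B ⊆ A) (hp : ∀ a ∈ B, 0 ≤ p a)
    {c ε : ℝ} (hc : 0 ≤ c) (hε : 0 ≤ ε) (hε₁ : ε ≤ 1) (hB : ∀ a ∈ B, ε * c ≤ |p a - c|) :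
    #B * (ε ^ 2 * c) ≤ 9 * hellingerSq A p fun _ ↦ c :=
  calc #B * (ε ^ 2 * c) = ∑ _a ∈ B, ε ^ 2 * c := by rw [sum_const, nsmul_eq_mul]
    _ ≤ ∑ a ∈ B, 9 * (√(p a) - √c) ^ 2 :=
        sum_le_sum fun a ha ↦ sq_mul_le_sq_sqrt_sub_sqrt (hp a ha) hc hε hε₁ (hB a ha)
    _ ≤ ∑ a ∈ A, 9 * (√(p a) - √c) ^ 2 :=
        sum_le_sum_of_subset_of_nonneg hBA fun _ _ _ ↦ by positivity
    _ = 9 * hellingerSq A p fun _ ↦ c := (mul_sum ..).symm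

end Divergence

section SparseGraph

variable {V : Type*} [Fintype V] {G : SimpleGraph V} [DecidableRel G.Adj] {δ : ℝ}

lemma exists_degree_le_of_card_edgeFinset_le [Nonempty V]
    (hG : #G.edgeFinset ≤ δ * (Fintype.card V).choose 2) :
    ∃ v, G.degree v ≤ δ * (Fintype.card V - 1) := by
  have hsum : ∑ v, (G.degree v : ℝ) ≤ ∑ _v : V, δ * ((Fintype.card V : ℝ) - 1) := by
    rw [← Nat.cast_sum, G.sum_degrees_eq_twice_card_edges, sum_const, card_univ, nsmul_eq_mul]
    rw [Nat.cast_choose_two] at hG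
    push_cast
    linarith
  obtain ⟨v, -, hv⟩ := exists_le_of_sum_le univ_nonempty hsum
  exact ⟨v, hv⟩

lemma two_mul_card_edgeFinset_le_of_cliqueFree {k : ℕ} (hG : G.CliqueFree (k + 1)) :
    2 * k * #G.edgeFinset ≤ (k - 1) * Fintype.card V ^ 2 := by
  have h := hG.card_edgeFinset_le
  dsimp only at h
  rw [← SimpleGraph.card_edgeFinset_turanGraph] at h
  exact (Nat.mul_le_mul_left _ h).trans SimpleGraph.mul_card_edgeFinset_turanGraph_le

variable (G) in
lemma choose_two_le_card_edgeFinset_add_compl [DecidableEq V] :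
    (Fintype.card V).choose 2 ≤ #G.edgeFinset + #Gᶜ.edgeFinset := by
  rw [← SimpleGraph.card_edgeFinset_top_eq_card_choose_two]
  refine (card_le_card fun e he ↦ ?_).trans (card_union_le _ _)
  rwa [← SimpleGraph.edgeFinset_sup, SimpleGraph.mem_edgeFinset, sup_compl_eq_top,
    ← SimpleGraph.mem_edgeFinset]

lemma exists_isNIndepSet_of_card_edgeFinset_le {k : ℕ} (hk : k + 2 ≤ Fintype.card V)
    (hδ : δ * (k + 1) ^ 2 < 1) (hG : #G.edgeFinset ≤ δ * (Fintype.card V).choose 2) :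
    ∃ S, G.IsNIndepSet (k + 2) S := by
  by_contra! hfree
  have hturan := two_mul_card_edgeFinset_le_of_cliqueFree (k := k + 1)
    (G.cliqueFree_compl.2 hfree)
  have hcompl := choose_two_le_card_edgeFinset_add_compl G
  rw [Nat.add_sub_cancel] at hturan
  generalize Fintype.card V = n at *
  rify at *
  rw [Nat.cast_choose_two] at *
  have hle : (k + 1) * ((1 - δ) * (n - 1)) ≤ k * (n : ℝ) := by
    refine le_of_mul_le_mul_right ?_ (show (0 : ℝ) < n by linarith)
    nlinarith
  nlinarith

end SparseGraph

section AlmostEquidistant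

variable {ι V P : Type*} [Fintype ι] [NormedAddCommGroup V] [InnerProductSpace ℝ V]
  [MetricSpace P] [NormedAddTorsor V P] {p : ι → P}

lemma exists_sum_sum_mul_sq_dist_eq_zero (hp : ¬AffineIndependent ℝ p) :
    ∃ w : ι → ℝ, ∑ i, w i = 0 ∧ ∑ i, ∑ j, w i * w j * dist (p i) (p j) ^ 2 = 0 ∧
      0 < ∑ i, w i ^ 2 := by
  rw [affineIndependent_iff_of_fintype] at hp
  push Not at hp
  obtain ⟨w, hw, hwp, i, hi⟩ := hp
  refine ⟨w, hw, ?_, sum_pos' (fun _ _ ↦ sq_nonneg _) ⟨i, mem_univ i, by positivity⟩⟩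
  have hinner := EuclideanGeometry.inner_weightedVSub p hw p hw
  rw [hwp, inner_zero_left] at hinner
  simp_rw [sq (dist _ _)]
  linarith

lemma le_card_mul_sub_of_not_affineIndependent (hp : ¬AffineIndependent ℝ p) {m M : ℝ}
    (h : Pairwise fun i j ↦ dist (p i) (p j) ^ 2 ∈ Set.Icc m M) :
    M ≤ Fintype.card ι * (M - m) := by
  obtain ⟨w, hw, hwd, hpos⟩ := exists_sum_sum_mul_sq_dist_eq_zero hp
  have hterm (i j : ι) : w i * w j * dist (p i) (p j) ^ 2 ≤
      m * (w i * w j) + (M - m) / 2 * (w i ^ 2 + w j ^ 2) - if i = j then M * w i ^ 2 else 0 := by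
    obtain rfl | hij := eq_or_ne i j
    · rw [if_pos rfl, dist_self]
      linarith
    · obtain ⟨hm, hM⟩ := h hij
      rw [if_neg hij]
      nlinarith [sq_nonneg (w i - w j), sq_nonneg (w i + w j)]
  have hsum := sum_le_sum fun i (_ : i ∈ univ) ↦ sum_le_sum fun j (_ : j ∈ univ) ↦ hterm i j
  simp only [hwd, sum_sub_distrib, sum_add_distrib, ← mul_sum, hw, sum_ite_eq, mem_univ, if_true,
    sum_const, card_univ, nsmul_eq_mul, mul_zero, zero_add] at hsum
  refine le_of_mul_le_mul_right ?_ hpos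
  linarith

lemma sq_mem_Icc_of_abs_div_sub_one_lt {A d ε : ℝ} (hε : 0 < ε) (hε₁ : ε < 1)
    (h : |A / (1 + d ^ 2) - 1| < ε) : d ^ 2 ∈ Set.Icc (A / (1 + ε) - 1) (A / (1 - ε) - 1) := by
  obtain ⟨hlo, hhi⟩ := abs_sub_lt_iff.1 h
  have hd : 0 < 1 + d ^ 2 := by positivity
  have hA_le : A ≤ (1 + ε) * (1 + d ^ 2) := (div_le_iff₀ hd).1 (by linarith)
  have hA_ge : (1 - ε) * (1 + d ^ 2) ≤ A := (le_div_iff₀ hd).1 (by linarith)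
  rw [Set.mem_Icc, sub_le_iff_le_add, div_le_iff₀ (by linarith), le_sub_iff_add_le,
    le_div_iff₀ (by linarith)]
  constructor <;> linarith

lemma mul_one_sub_le_of_not_affineIndependent (hp : ¬AffineIndependent ℝ p) {A ε : ℝ}
    (hA : 0 ≤ A) (hε : 0 < ε) (hε₁ : ε < 1)
    (h : Pairwise fun i j ↦ |A / (1 + dist (p i) (p j) ^ 2) - 1| < ε) :
    A * (1 - 2 * Fintype.card ι * ε) ≤ 1 - ε := by
  have hM := le_card_mul_sub_of_not_affineIndependent hp
    fun i j hij ↦ sq_mem_Icc_of_abs_div_sub_one_lt hε hε₁ (h hij)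
  have h₁ : 0 < 1 - ε := by linarith
  have hwidth : A / (1 - ε) - 1 - (A / (1 + ε) - 1) ≤ 2 * ε * (A / (1 - ε)) := by
    have : A / (1 - ε) - 1 - (A / (1 + ε) - 1) = 2 * ε * (A / (1 - ε)) / (1 + ε) := by
      field_simp
      ring
    rw [this]
    exact div_le_self (by positivity) (by linarith)
  have hA_le : A / (1 - ε) * (1 - 2 * Fintype.card ι * ε) ≤ 1 := by
    nlinarith [mul_le_mul_of_nonneg_left hwidth (Fintype.card ι).cast_nonneg (α := ℝ)]
  rwa [div_mul_eq_mul_div, div_le_one h₁] at hA_le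

end AlmostEquidistant

section DeviationGraph

variable {ι P : Type*} [MetricSpace P]

/-- The graph joining two indices when the kernel `(1 + dist ^ 2)⁻¹` of the corresponding points
differs from `A⁻¹` by a relative error of at least `ε`; its edges are the exceptional pairs of an
almost uniform output distribution. -/
def deviationGraph (p : ι → P) (A ε : ℝ) : SimpleGraph ι where
  Adj i j := i ≠ j ∧ ε ≤ |A / (1 + dist (p i) (p j) ^ 2) - 1|
  symm := ⟨fun i j h ↦ ⟨h.1.symm, dist_comm (p i) (p j) ▸ h.2⟩⟩
  loopless := ⟨fun _ h ↦ h.1 rfl⟩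

lemma abs_div_sub_one_lt_of_not_adj {p : ι → P} {A ε : ℝ} {i j : ι} (hij : i ≠ j)
    (h : ¬(deviationGraph p A ε).Adj i j) : |A / (1 + dist (p i) (p j) ^ 2) - 1| < ε :=
  not_le.1 fun hle ↦ h ⟨hij, hle⟩

variable {V : Type*} [NormedAddCommGroup V] [InnerProductSpace ℝ V] [FiniteDimensional ℝ V]
  [NormedAddTorsor V P] {p : ι → P} {A ε r : ℝ}

lemma mul_one_sub_le_of_isNIndepSet_deviationGraph (hA : 0 ≤ A) (hε : 0 < ε) (hε₁ : ε < 1)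
    {S : Finset ι} (hS : (deviationGraph p A ε).IsNIndepSet (Module.finrank ℝ V + 2) S) :
    A * (1 - 2 * (Module.finrank ℝ V + 2) * ε) ≤ 1 - ε := by
  have hdep : ¬AffineIndependent ℝ fun i : S ↦ p i := fun hind ↦ by
    have hle := hind.card_le_finrank_succ.trans
      (Nat.succ_le_succ (Submodule.finrank_le (R := ℝ) (M := V) _))
    rw [Fintype.card_coe, hS.card_eq] at hle
    omega
  have hpair : Pairwise fun i j : S ↦ |A / (1 + dist (p i) (p j) ^ 2) - 1| < ε := fun i j hij ↦
    have hne : (i : ι) ≠ j := Subtype.coe_ne_coe.2 hij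
    abs_div_sub_one_lt_of_not_adj hne (hS.isIndepSet i.2 j.2 hne)
  have h := mul_one_sub_le_of_not_affineIndependent hdep hA hε hε₁ hpair
  rw [Fintype.card_coe, hS.card_eq] at h
  exact_mod_cast h

lemma dist_lt_of_abs_div_sub_one_lt {d : ℝ} (hr : 0 < r) (hr₁ : r ≤ 1) (hε₁ : ε < 1)
    (hA : A * (1 - r ^ 2 / 2) ≤ 1 - ε) (h : |A / (1 + d ^ 2) - 1| < ε) : d < r := by
  have hA_gt : (1 - ε) * (1 + d ^ 2) < A :=
    (lt_div_iff₀ (by positivity)).1 (by linarith [(abs_sub_lt_iff.1 h).2])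
  by_contra! hrd
  have hr_sq : r ^ 2 ≤ 1 := pow_le_one₀ hr.le hr₁
  have hge : 1 ≤ (1 + d ^ 2) * (1 - r ^ 2 / 2) :=
    calc 1 ≤ (1 + r ^ 2) * (1 - r ^ 2 / 2) := by nlinarith
      _ ≤ (1 + d ^ 2) * (1 - r ^ 2 / 2) := by gcongr; linarith
  nlinarith

theorem exists_ball_of_card_edgeFinset_deviationGraph_le [Fintype ι] {k : ℕ}
    (hk : Module.finrank ℝ V = k) (hcard : k + 2 ≤ Fintype.card ι) (hA : 0 ≤ A) (hr : 0 < r)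
    (hr₁ : r ≤ 1) {δ : ℝ} (hδ : δ * (k + 1) ^ 2 < 1)
    (hG : #(deviationGraph p A (r ^ 2 / (4 * (k + 2)))).edgeFinset ≤
      δ * (Fintype.card ι).choose 2) :
    ∃ c, (1 - δ) * Fintype.card ι ≤ #{i | p i ∈ Metric.ball c r} := by
  have : Nonempty ι := Fintype.card_pos_iff.1 (by omega)
  set ε := r ^ 2 / (4 * ((k : ℝ) + 2)) with hε_def
  have hε : 0 < ε := by positivity
  have hε₁ : ε < 1 := (div_lt_one (by positivity)).2 (by nlinarith [(k.cast_nonneg : (0 : ℝ) ≤ k)])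
  obtain ⟨S, hS⟩ := exists_isNIndepSet_of_card_edgeFinset_le hcard hδ hG
  obtain ⟨v, hv⟩ := exists_degree_le_of_card_edgeFinset_le hG
  have hA_le : A * (1 - r ^ 2 / 2) ≤ 1 - ε := by
    have h := mul_one_sub_le_of_isNIndepSet_deviationGraph hA hε hε₁ (hk ▸ hS)
    rw [hk] at h
    rwa [show 2 * ((k : ℝ) + 2) * ε = r ^ 2 / 2 by rw [hε_def]; field_simp; norm_num] at h
  have hsub : ((deviationGraph p A ε).neighborFinset v)ᶜ ⊆
      ({i | p i ∈ Metric.ball (p v) r} : Finset ι) := by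
    intro i hi
    rw [mem_compl, SimpleGraph.mem_neighborFinset] at hi
    rw [mem_filter_univ, Metric.mem_ball']
    obtain rfl | hvi := eq_or_ne v i
    · rwa [dist_self]
    · exact dist_lt_of_abs_div_sub_one_lt hr hr₁ hε₁ hA_le (abs_div_sub_one_lt_of_not_adj hvi hi)
  have hδ₀ : 0 ≤ δ := by
    refine nonneg_of_mul_nonneg_left ((Nat.cast_nonneg _).trans hv) (sub_pos.2 ?_)
    exact_mod_cast (by omega : 1 < Fintype.card ι)
  refine ⟨p v, le_trans ?_ (Nat.cast_le.2 (card_le_card hsub))⟩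
  rw [card_compl, SimpleGraph.card_neighborFinset_eq_degree,
    Nat.cast_sub ((deviationGraph p A ε).degree_lt_card_verts v).le]
  linarith

end DeviationGraph

section OutputDistribution

/-- The unordered pairs of distinct elements of `Fin n`, each encoded as `(i, j)` with `i < j`. -/
def ltPairs (n : ℕ) : Finset (Fin n × Fin n) := {e | e.1 < e.2}

lemma sum_sum_ite_lt_eq_sum_ltPairs {n : ℕ} (f : Fin n → Fin n → ℝ) :
    ∑ i, ∑ j, (if i < j then f i j else 0) = ∑ e ∈ ltPairs n, f e.1 e.2 := by
  rw [ltPairs, sum_filter, ← univ_product_univ, sum_product]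

lemma card_filter_adj_ltPairs {n : ℕ} (G : SimpleGraph (Fin n)) [DecidableRel G.Adj] :
    #{e ∈ ltPairs n | G.Adj e.1 e.2} = #G.edgeFinset := by
  refine card_bij (fun e _ ↦ s(e.1, e.2)) (by simp) ?_ fun e ↦ Sym2.ind (fun i j hij ↦ ?_) e
  · rintro ⟨i, j⟩ he ⟨i', j'⟩ he' h
    simp only [ltPairs, mem_filter, mem_univ, true_and] at he he'
    obtain ⟨rfl, rfl⟩ | ⟨rfl, rfl⟩ := Sym2.eq_iff.1 h
    · rfl
    · exact absurd he.1 he'.1.asymm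
  · rw [SimpleGraph.mem_edgeFinset, SimpleGraph.mem_edgeSet] at hij
    obtain hlt | hlt := hij.ne.lt_or_gt
    · exact ⟨(i, j), by simp [ltPairs, hlt, hij], rfl⟩
    · exact ⟨(j, i), by simp [ltPairs, hlt, hij.symm], Sym2.eq_swap⟩

lemma card_ltPairs (n : ℕ) : #(ltPairs n) = n.choose 2 := by
  have h := card_filter_adj_ltPairs (⊤ : SimpleGraph (Fin n))
  rw [SimpleGraph.card_edgeFinset_top_eq_card_choose_two, Fintype.card_fin] at h
  rw [← h, filter_true_of_mem fun e he ↦ (mem_filter.1 he).2.ne]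

lemma unifPair_eq_inv_choose (n : ℕ) : unifPair n = (n.choose 2 : ℝ)⁻¹ := by
  rw [unifPair, Nat.cast_choose_two, one_div]

variable {n s : ℕ} (y : Fin n → EuclideanSpace ℝ (Fin s))

lemma KLUnifQ_eq_finsetKL (y : Fin n → EuclideanSpace ℝ (Fin 2)) :
    KLUnifQ y = finsetKL (ltPairs n) (fun _ ↦ unifPair n) fun e ↦ qmat y e.1 e.2 :=
  sum_sum_ite_lt_eq_sum_ltPairs _

lemma KLQUnif_eq_finsetKL (y : Fin n → EuclideanSpace ℝ (Fin 2)) :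
    KLQUnif y = finsetKL (ltPairs n) (fun e ↦ qmat y e.1 e.2) fun _ ↦ unifPair n :=
  sum_sum_ite_lt_eq_sum_ltPairs _

lemma Zsum_eq_sum_ltPairs : Zsum y = ∑ e ∈ ltPairs n, (1 + ‖y e.1 - y e.2‖ ^ 2)⁻¹ :=
  sum_sum_ite_lt_eq_sum_ltPairs _

/-- The harmonic mean of `1 + ‖y i - y j‖ ^ 2` over all unordered pairs. It is the common value of
these quantities when the output distribution of `y` is uniform. -/
def harmonicScale : ℝ := n.choose 2 / Zsum y

lemma harmonicScale_nonneg : 0 ≤ harmonicScale y := by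
  rw [harmonicScale, Zsum_eq_sum_ltPairs]
  positivity

variable (hn : 2 ≤ n)
include hn

lemma unifPair_pos : 0 < unifPair n := by
  rw [unifPair_eq_inv_choose]
  exact inv_pos.2 (Nat.cast_pos.2 (Nat.choose_pos hn))

lemma Zsum_pos : 0 < Zsum y := by
  rw [Zsum_eq_sum_ltPairs]
  exact sum_pos (fun _ _ ↦ by positivity) (card_pos.1 (card_ltPairs n ▸ Nat.choose_pos hn))

lemma qmat_pos (i j : Fin n) : 0 < qmat y i j :=
  div_pos (by positivity) (Zsum_pos y hn)

lemma sum_ltPairs_unifPair : ∑ _e ∈ ltPairs n, unifPair n = 1 := by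
  rw [sum_const, card_ltPairs, nsmul_eq_mul, unifPair_eq_inv_choose]
  exact mul_inv_cancel₀ (Nat.cast_ne_zero.2 (Nat.choose_pos hn).ne')

lemma sum_ltPairs_qmat : ∑ e ∈ ltPairs n, qmat y e.1 e.2 = 1 := by
  simp only [qmat, ← sum_div, ← Zsum_eq_sum_ltPairs]
  exact div_self (Zsum_pos y hn).ne'

lemma qmat_sub_unifPair (i j : Fin n) :
    qmat y i j - unifPair n =
      unifPair n * (harmonicScale y / (1 + dist (y i) (y j) ^ 2) - 1) := by
  have hC : (n.choose 2 : ℝ) ≠ 0 := Nat.cast_ne_zero.2 (Nat.choose_pos hn).ne'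
  rw [qmat, harmonicScale, unifPair_eq_inv_choose, dist_eq_norm]
  field_simp

lemma hellingerSq_le_of_finsetKL_le {D : ℝ}
    (hD : finsetKL (ltPairs n) (fun _ ↦ unifPair n) (fun e ↦ qmat y e.1 e.2) ≤ D ∨
      finsetKL (ltPairs n) (fun e ↦ qmat y e.1 e.2) (fun _ ↦ unifPair n) ≤ D) :
    hellingerSq (ltPairs n) (fun e ↦ qmat y e.1 e.2) (fun _ ↦ unifPair n) ≤ D := by
  have hu : ∀ e ∈ ltPairs n, 0 < unifPair n := fun _ _ ↦ unifPair_pos hn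
  have hq : ∀ e ∈ ltPairs n, 0 < qmat y e.1 e.2 := fun _ _ ↦ qmat_pos y hn _ _
  have hsum := (sum_ltPairs_qmat y hn).trans (sum_ltPairs_unifPair hn).symm
  obtain hD | hD := hD
  · rw [hellingerSq_comm]
    exact (hellingerSq_le_finsetKL hu hq hsum.symm).trans hD
  · exact (hellingerSq_le_finsetKL hq hu hsum).trans hD

lemma card_edgeFinset_deviationGraph_mul_sq_le {ε : ℝ} (hε : 0 ≤ ε) (hε₁ : ε ≤ 1) :
    #(deviationGraph y (harmonicScale y) ε).edgeFinset * ε ^ 2 ≤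
      9 * hellingerSq (ltPairs n) (fun e ↦ qmat y e.1 e.2) (fun _ ↦ unifPair n) *
        n.choose 2 := by
  have hu := unifPair_pos hn
  have h := card_mul_le_hellingerSq (p := fun e ↦ qmat y e.1 e.2) (c := unifPair n)
    (filter_subset (fun e ↦ (deviationGraph y (harmonicScale y) ε).Adj e.1 e.2) (ltPairs n))
    (fun _ _ ↦ (qmat_pos y hn _ _).le) hu.le hε hε₁ fun e he ↦ by
      rw [qmat_sub_unifPair y hn, abs_mul, abs_of_pos hu, mul_comm]
      exact mul_le_mul_of_nonneg_left (mem_filter.1 he).2.2 hu.le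
  rwa [card_filter_adj_ltPairs (deviationGraph y _ ε), unifPair_eq_inv_choose, ← mul_assoc,
    ← div_eq_mul_inv, div_le_iff₀ (Nat.cast_pos.2 (Nat.choose_pos hn)),
    ← unifPair_eq_inv_choose] at h

lemma card_edgeFinset_deviationGraph_le_of_hellingerSq_le {r : ℝ} (hr : 0 < r) (hr₁ : r ≤ 1)
    (hH : hellingerSq (ltPairs n) (fun e ↦ qmat y e.1 e.2) (fun _ ↦ unifPair n) ≤
      r ^ 5 / (144 * (s + 2) ^ 4)) :
    #(deviationGraph y (harmonicScale y) (r ^ 2 / (4 * (s + 2)))).edgeFinset ≤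
      r / (s + 2) ^ 2 * n.choose 2 := by
  have hε₁ : r ^ 2 / (4 * ((s : ℝ) + 2)) ≤ 1 :=
    (div_le_one (by positivity)).2 (by nlinarith [(s.cast_nonneg : (0 : ℝ) ≤ s)])
  refine le_of_mul_le_mul_right ?_ (show 0 < (r ^ 2 / (4 * ((s : ℝ) + 2))) ^ 2 by positivity)
  calc #(deviationGraph y (harmonicScale y) (r ^ 2 / (4 * (s + 2)))).edgeFinset *
          (r ^ 2 / (4 * ((s : ℝ) + 2))) ^ 2
      ≤ 9 * hellingerSq (ltPairs n) (fun e ↦ qmat y e.1 e.2) (fun _ ↦ unifPair n) *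
          n.choose 2 :=
        card_edgeFinset_deviationGraph_mul_sq_le y hn (by positivity) hε₁
    _ ≤ 9 * (r ^ 5 / (144 * (s + 2) ^ 4)) * n.choose 2 := by
        gcongr
    _ = r / (s + 2) ^ 2 * n.choose 2 * (r ^ 2 / (4 * (s + 2))) ^ 2 := by
        field_simp
        ring

end OutputDistribution

theorem exists_ball_of_hellingerSq_le {n s : ℕ} (hn : s + 2 ≤ n)
    (y : Fin n → EuclideanSpace ℝ (Fin s)) {r : ℝ} (hr : 0 < r)
    (hH : hellingerSq (ltPairs n) (fun e ↦ qmat y e.1 e.2) (fun _ ↦ unifPair n) ≤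
      r ^ 5 / (144 * (s + 2) ^ 4)) :
    ∃ c, (1 - r) * n ≤ #{i | y i ∈ Metric.ball c r} := by
  obtain hr₁ | hr₁ := lt_or_ge 1 r
  · exact ⟨0, (mul_nonpos_of_nonpos_of_nonneg (by linarith) n.cast_nonneg).trans
      (Nat.cast_nonneg _)⟩
  have hs : (0 : ℝ) ≤ s := s.cast_nonneg
  have hδr : r / ((s : ℝ) + 2) ^ 2 ≤ r := div_le_self hr.le (by nlinarith)
  have hδs : r / ((s : ℝ) + 2) ^ 2 * (s + 1) ^ 2 < 1 := by
    rw [div_mul_eq_mul_div, div_lt_one (by positivity)]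
    nlinarith
  have hE := card_edgeFinset_deviationGraph_le_of_hellingerSq_le y (by omega) hr hr₁ hH
  rw [← Fintype.card_fin n] at hn
  obtain ⟨c, hc⟩ := exists_ball_of_card_edgeFinset_deviationGraph_le (p := y)
    finrank_euclideanSpace_fin hn (harmonicScale_nonneg y) hr hr₁ hδs
    (by simpa only [Fintype.card_fin] using hE)
  rw [Fintype.card_fin] at hc
  exact ⟨c, le_trans (by gcongr) hc⟩

lemma tendsto_div_pow_of_tendsto_div_pow_succ {α : Type*} {l : Filter α} {f r : α → ℝ} {k : ℕ}
    (hr : ∀ a, r a ≠ 0) (hr0 : Tendsto r l (nhds 0))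
    (hf : Tendsto (fun a ↦ f a / r a ^ (k + 1)) l (nhds 0)) :
    Tendsto (fun a ↦ f a / r a ^ k) l (nhds 0) := by
  have hmul : Tendsto (fun a ↦ f a / r a ^ (k + 1) * r a) l (nhds 0) := by
    simpa only [zero_mul] using hf.mul hr0
  refine hmul.congr fun a ↦ ?_
  rw [pow_succ, ← div_div, div_mul_cancel₀ _ (hr a)]

theorem stmt10_general {s : ℕ} (y : (n : ℕ) → Fin n → EuclideanSpace ℝ (Fin s)) (r : ℕ → ℝ)
    (hr : ∀ n, 0 < r n)
    (hKL : Tendsto (fun n ↦ finsetKL (ltPairs n) (fun _ ↦ unifPair n)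
        (fun e ↦ qmat (y n) e.1 e.2) / r n ^ 5) atTop (nhds 0) ∨
      Tendsto (fun n ↦ finsetKL (ltPairs n) (fun e ↦ qmat (y n) e.1 e.2)
        (fun _ ↦ unifPair n) / r n ^ 5) atTop (nhds 0)) :
    ∀ᶠ n in atTop, ∃ c, (1 - r n) * n ≤ #{i | y n i ∈ Metric.ball c (r n)} := by
  have hC : 0 < (144 * ((s : ℝ) + 2) ^ 4)⁻¹ := by positivity
  have hle {D : ℕ → ℝ} (hD : Tendsto (fun n ↦ D n / r n ^ 5) atTop (nhds 0)) :
      ∀ᶠ n in atTop, D n ≤ r n ^ 5 / (144 * (s + 2) ^ 4) :=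
    (hD.eventually_le_const hC).mono fun n hn ↦ by
      rwa [div_le_iff₀ (pow_pos (hr n) 5), inv_mul_eq_div] at hn
  filter_upwards [eventually_ge_atTop (s + 2),
    hKL.elim (fun h ↦ (hle h).mono fun _ ↦ Or.inl) fun h ↦ (hle h).mono fun _ ↦ Or.inr]
    with n hn hn_le
  exact exists_ball_of_hellingerSq_le hn (y n) (hr n)
    (hellingerSq_le_of_finsetKL_le (y n) (by omega) hn_le)

/-- if `r(n) → 0` and `D(U_n‖Q_n)/r(n)⁶ → 0` or `D(Q_n‖U_n)/r(n)⁶ → 0`, then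
for all sufficiently large `n` there is an open ball of radius `r(n)` in `ℝ²` containing at
least `(1 - r(n))·n` of the points `y_1, …, y_n`. -/
theorem stmt10 (y : (n : ℕ) → Fin n → EuclideanSpace ℝ (Fin 2))
    (r : ℕ → ℝ) (hr : ∀ n, 0 < r n) (hr0 : Tendsto r atTop (nhds 0))
    (hKL : Tendsto (fun n => KLUnifQ (y n) / r n ^ 6) atTop (nhds 0) ∨
      Tendsto (fun n => KLQUnif (y n) / r n ^ 6) atTop (nhds 0)) :
    ∀ᶠ n in atTop, ∃ c : EuclideanSpace ℝ (Fin 2),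
      (1 - r n) * n ≤
        (Finset.univ.filter (fun i : Fin n => y n i ∈ Metric.ball c (r n))).card := by
  simp only [KLUnifQ_eq_finsetKL, KLQUnif_eq_finsetKL] at hKL
  exact stmt10_general y r hr (hKL.imp
    (tendsto_div_pow_of_tendsto_div_pow_succ (fun n ↦ (hr n).ne') hr0)
    (tendsto_div_pow_of_tendsto_div_pow_succ (fun n ↦ (hr n).ne') hr0))

end
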